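/- For every finite set {B₁, …, B_k} of finite algebras in the language {∧, ∨, °, 0, 1} with the property that a quasi-identity is valid in all of B₁, …, B_k if and only if it is admissible in K₂, one has [7] ≤_m [|B₁|, …, |B_k|] in the multiset ordering. -/

import Mathlib

/-!
Since `{7} ≤ₘ [|B₁|, …, |Bₖ|]` only fails when every `|Bᵢ|` is at most `6`, it suffices to find a
`Bᵢ` with at least seven elements. Let `C` be the seven-element chain
`0 < s° < q < q° < s < s°° < 1`, generated by elements `q`, `s` subject to the relations
`q ≤ q°`, `q°° = q`, `q° ≤ s`, `s° ≤ q`; it is the subalgebra of `K₂ × K₂ × K₂` generated by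
`q = (a, a, 0)` and `s = (a, c, 1)`.

* `C` embeds into the free algebra of `K₂` on two generators `x`, `y`, by `q ↦ y ∧ y°` and
  `s ↦ x ∨ (y° ∨ y°°)`. Hence the implication from these relations to `s ≈ s°°` is not admissible
  (`not_admissible_chain`) and some `Bᵢ` contains elements `q`, `s` satisfying the relations with
  `s ≠ s°°`.
* `C` is subdirectly irreducible relative to the quasivariety generated by the free algebra, with
  critical pair `(s, s°°)`: adding to the relations any further equation between two of the seven
  elements makes the implication to `s ≈ s°°` admissible (`admissible_collapse`), hence valid in `Bᵢ`. So
  the seven elements stay distinct in `Bᵢ`.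

The second point rests on two facts on terms over `K₂`: a term evaluates to `0` or `1` when all
variables are `0`, and a term evaluating to something other than `a` when all variables are `a` is
constantly `0` or constantly `1`. If the relations hold identically but `s ≠ s°°` at a valuation
`v`, then `(q, s)` is `(a, a)` at the constant valuation `a`, is `(a, c)` at `v`, and is `(0, 1)` at
the constant valuation `0`. These are the three coordinates of `C` in `K₂ × K₂ × K₂`, so the seven
terms are pairwise separated by them.
-/

/-- Terms in the language {∧, ∨, °, 0, 1} over a set `V` of variables. -/
inductive MSTerm (V : Type) : Type
  | var : V → MSTerm V
  | meet : MSTerm V → MSTerm V → MSTerm V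
  | join : MSTerm V → MSTerm V → MSTerm V
  | star : MSTerm V → MSTerm V
  | zero : MSTerm V
  | one : MSTerm V

/-- An algebra in the language {∧, ∨, °, 0, 1}. -/
structure MSAlg where
  carrier : Type
  meet : carrier → carrier → carrier
  join : carrier → carrier → carrier
  star : carrier → carrier
  zero : carrier
  one : carrier

/-- Evaluation of a term in an algebra under an assignment of the variables. -/
def MSTerm.eval {V : Type} (A : MSAlg) (v : V → A.carrier) : MSTerm V → A.carrier
  | .var x => v x
  | .meet t s => A.meet (t.eval A v) (s.eval A v)
  | .join t s => A.join (t.eval A v) (s.eval A v)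
  | .star t => A.star (t.eval A v)
  | .zero => A.zero
  | .one => A.one

/-- Substitution of terms for variables. -/
def MSTerm.subst {V W : Type} (s : V → MSTerm W) : MSTerm V → MSTerm W
  | .var x => s x
  | .meet t u => .meet (t.subst s) (u.subst s)
  | .join t u => .join (t.subst s) (u.subst s)
  | .star t => .star (t.subst s)
  | .zero => .zero
  | .one => .one

/-- Validity of the identity `φ ≈ ψ` in the algebra `A`. -/
def MSIdValid {V : Type} (A : MSAlg) (φ ψ : MSTerm V) : Prop :=
  ∀ v : V → A.carrier, φ.eval A v = ψ.eval A v

/-- Validity of the quasi-identity `Γ ⇒ φ ≈ ψ` in the algebra `A`. -/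
def MSQValid (A : MSAlg) (Γ : List (MSTerm ℕ × MSTerm ℕ)) (φ ψ : MSTerm ℕ) : Prop :=
  ∀ v : ℕ → A.carrier,
    (∀ p ∈ Γ, p.1.eval A v = p.2.eval A v) → φ.eval A v = ψ.eval A v

/-- Admissibility of the quasi-identity `Γ ⇒ φ ≈ ψ` in the algebra `M`. -/
def MSAdmissible (M : MSAlg) (Γ : List (MSTerm ℕ × MSTerm ℕ)) (φ ψ : MSTerm ℕ) : Prop :=
  ∀ s : ℕ → MSTerm ℕ,
    (∀ p ∈ Γ, MSIdValid M (p.1.subst s) (p.2.subst s)) →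
    MSIdValid M (φ.subst s) (ψ.subst s)

/-- `A` is an MS-algebra: a bounded distributive lattice with a unary `°`
satisfying x ≤ x°°, (x ∧ y)° = x° ∨ y°, and 1° = 0. -/
def IsMSAlg (A : MSAlg) : Prop :=
  (∀ x y, A.meet x y = A.meet y x) ∧
  (∀ x y, A.join x y = A.join y x) ∧
  (∀ x y z, A.meet (A.meet x y) z = A.meet x (A.meet y z)) ∧
  (∀ x y z, A.join (A.join x y) z = A.join x (A.join y z)) ∧
  (∀ x y, A.meet x (A.join x y) = x) ∧
  (∀ x y, A.join x (A.meet x y) = x) ∧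
  (∀ x y z, A.meet x (A.join y z) = A.join (A.meet x y) (A.meet x z)) ∧
  (∀ x, A.join x A.zero = x) ∧
  (∀ x, A.meet x A.one = x) ∧
  (∀ x, A.meet x (A.star (A.star x)) = x) ∧
  (∀ x y, A.star (A.meet x y) = A.join (A.star x) (A.star y)) ∧
  A.star A.one = A.zero

/-- The Dershowitz–Manna multiset ordering (induced by the usual order on `ℕ`). -/
def MultisetLE (N N' : Multiset ℕ) : Prop :=
  ∀ x : ℕ, N'.count x < N.count x → ∃ y : ℕ, x < y ∧ N.count y < N'.count y

/-- K₂: the four-element MS-algebra on the chain 0 < a < c < 1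
(as `Fin 4`: 0 ↦ 0, a ↦ 1, c ↦ 2, 1 ↦ 3), with °0 = 1, °a = a, °c = 0, °1 = 0. -/
def K2alg : MSAlg := ⟨Fin 4, min, max, ![3, 1, 0, 0], 0, 3⟩

theorem MSTerm.eval_subst {V W : Type} (A : MSAlg) (σ : V → MSTerm W) (v : W → A.carrier)
    (t : MSTerm V) : (t.subst σ).eval A v = t.eval A (fun x => (σ x).eval A v) := by
  induction t <;> simp_all [MSTerm.subst, MSTerm.eval]

/-- The operation `°` of `K₂`, on `Fin 4` with `0, a, c, 1` encoded as `0, 1, 2, 3`. -/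
def K2star : Fin 4 → Fin 4 := ![3, 1, 0, 0]

/-- Evaluation of terms in `K₂`, with the carrier of `K2alg` presented as `Fin 4`. -/
def K2eval (w : ℕ → Fin 4) (t : MSTerm ℕ) : Fin 4 := t.eval K2alg w

theorem K2eval_subst (σ : ℕ → MSTerm ℕ) (w : ℕ → Fin 4) (t : MSTerm ℕ) :
    K2eval w (t.subst σ) = K2eval (fun n => K2eval w (σ n)) t :=
  MSTerm.eval_subst K2alg σ w t

/-- `{0, 1}` is a subalgebra of `K₂`. -/
theorem eval_const_zero (t : MSTerm ℕ) :
    K2eval (fun _ => 0) t = 0 ∨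
      K2eval (fun _ => 0) t = 3 := by
  have hmeet : ∀ x y : Fin 4, (x = 0 ∨ x = 3) → (y = 0 ∨ y = 3) →
      (min x y = 0 ∨ min x y = 3) := by decide
  have hjoin : ∀ x y : Fin 4, (x = 0 ∨ x = 3) → (y = 0 ∨ y = 3) →
      (max x y = 0 ∨ max x y = 3) := by decide
  have hstar : ∀ x : Fin 4, (x = 0 ∨ x = 3) → (K2star x = 0 ∨ K2star x = 3) := by decide
  induction t with
  | var x => exact Or.inl rfl
  | meet t u iht ihu => exact hmeet _ _ iht ihu
  | join t u iht ihu => exact hjoin _ _ iht ihu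
  | star t ih => exact hstar _ ih
  | zero => exact Or.inl rfl
  | one => exact Or.inr rfl

/-- A term whose value at the constant valuation `a` is not `a` is constantly `0` or constantly
`1`: the pairs `(a, z)`, `(0, 0)`, `(1, 1)` form a subalgebra of `K₂ × K₂`. -/
theorem eval_const_a (v : ℕ → Fin 4) (t : MSTerm ℕ) :
    K2eval (fun _ => 1) t = 1 ∨
      (K2eval (fun _ => 1) t = 0 ∧ K2eval v t = 0) ∨
      (K2eval (fun _ => 1) t = 3 ∧ K2eval v t = 3) := by
  have hmeet : ∀ x y z w : Fin 4, (x = 1 ∨ (x = 0 ∧ z = 0) ∨ (x = 3 ∧ z = 3)) →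
      (y = 1 ∨ (y = 0 ∧ w = 0) ∨ (y = 3 ∧ w = 3)) →
      (min x y = 1 ∨ (min x y = 0 ∧ min z w = 0) ∨ (min x y = 3 ∧ min z w = 3)) := by decide
  have hjoin : ∀ x y z w : Fin 4, (x = 1 ∨ (x = 0 ∧ z = 0) ∨ (x = 3 ∧ z = 3)) →
      (y = 1 ∨ (y = 0 ∧ w = 0) ∨ (y = 3 ∧ w = 3)) →
      (max x y = 1 ∨ (max x y = 0 ∧ max z w = 0) ∨ (max x y = 3 ∧ max z w = 3)) := by decide
  have hstar : ∀ x z : Fin 4, (x = 1 ∨ (x = 0 ∧ z = 0) ∨ (x = 3 ∧ z = 3)) →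
      (K2star x = 1 ∨ (K2star x = 0 ∧ K2star z = 0) ∨ (K2star x = 3 ∧ K2star z = 3)) := by decide
  induction t with
  | var x => exact Or.inl rfl
  | meet t u iht ihu => exact hmeet _ _ _ _ iht ihu
  | join t u iht ihu => exact hjoin _ _ _ _ iht ihu
  | star t ih => exact hstar _ _ ih
  | zero => exact Or.inr (Or.inl ⟨rfl, rfl⟩)
  | one => exact Or.inr (Or.inr ⟨rfl, rfl⟩)

/-- The generator `q` of the seven-element chain. -/
def tq : MSTerm ℕ := .var 0

/-- The generator `s` of the seven-element chain. -/
def ts : MSTerm ℕ := .var 1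

/-- The defining relations `q ≤ q°`, `q°° = q`, `q° ≤ s`, `s° ≤ q` of the seven-element chain, with
`x ≤ y` written as `x ∧ y ≈ x`. -/
def chainRel : List (MSTerm ℕ × MSTerm ℕ) :=
  [(.meet tq (.star tq), tq), (.star (.star tq), tq),
    (.meet (.star tq) ts, .star tq), (.meet (.star ts) tq, .star ts)]

/-- Terms for the elements `0 < s° < q < q° < s < s°° < 1` of the chain. -/
def chainTerm : Fin 7 → MSTerm ℕ :=
  ![.zero, .star ts, tq, .star tq, ts, .star (.star ts), .one]

/-- The values of `chainTerm` in `K₂` as a function of the values of `q` and `s`. -/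
def chainVal (q s : Fin 4) : Fin 7 → Fin 4 :=
  ![0, K2star s, q, K2star q, s, K2star (K2star s), 3]

theorem chainTerm_eval (w : ℕ → Fin 4) (i : Fin 7) :
    K2eval w (chainTerm i) = chainVal (w 0) (w 1) i := by
  fin_cases i <;> rfl

/-- The relations of `chainRel` for elements `q`, `s` of `K₂`. -/
def ChainRelHolds (q s : Fin 4) : Prop :=
  min q (K2star q) = q ∧ K2star (K2star q) = q ∧
    min (K2star q) s = K2star q ∧ min (K2star s) q = K2star s

instance (q s : Fin 4) : Decidable (ChainRelHolds q s) := by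
  unfold ChainRelHolds; infer_instance

theorem chainRel_iff (w : ℕ → Fin 4) :
    (∀ p ∈ chainRel, K2eval w p.1 = K2eval w p.2) ↔ ChainRelHolds (w 0) (w 1) := by
  simp only [chainRel, List.forall_mem_cons, List.not_mem_nil, false_imp_iff, implies_true,
    and_true]
  exact Iff.rfl

theorem not_admissible_chain :
    ¬ MSAdmissible K2alg chainRel ts (.star (.star ts)) := by
  intro h
  let y : MSTerm ℕ := .var 0
  let x : MSTerm ℕ := .var 1
  let σ : ℕ → MSTerm ℕ := fun n =>
    if n = 0 then .meet y (.star y) else .join x (.join (.star y) (.star (.star y)))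
  have hrel : ∀ x y : Fin 4, ChainRelHolds (min y (K2star y))
      (max x (max (K2star y) (K2star (K2star y)))) := by decide
  have hΓ : ∀ w, ∀ p ∈ chainRel, K2eval w (p.1.subst σ) = K2eval w (p.2.subst σ) := by
    intro w p hp
    rw [K2eval_subst, K2eval_subst]
    exact (chainRel_iff _).2 (hrel (w 1) (w 0)) p hp
  have h1 := h σ fun p hp w => hΓ w p hp
  -- At `y = a`, `x = c` the instance of `s` is `c`, while that of `s°°` is `1`.
  have h2 : (2 : Fin 4) = 3 := h1 (fun n => if n = 0 then (1 : Fin 4) else (2 : Fin 4))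
  exact absurd h2 (by decide)

theorem admissible_collapse {i j : Fin 7} (hij : i ≠ j) :
    MSAdmissible K2alg ((chainTerm i, chainTerm j) :: chainRel) ts (.star (.star ts)) := by
  intro σ hσ v
  let Q : (ℕ → Fin 4) → Fin 4 := fun w => K2eval w (σ 0)
  let S : (ℕ → Fin 4) → Fin 4 := fun w => K2eval w (σ 1)
  have hΓ : ∀ w, ChainRelHolds (Q w) (S w) := fun w =>
    (chainRel_iff (fun n => K2eval w (σ n))).1 fun p hp => by
      rw [← K2eval_subst, ← K2eval_subst]
      exact hσ p (List.mem_cons_of_mem _ hp) w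
  have hE : ∀ w, chainVal (Q w) (S w) i = chainVal (Q w) (S w) j := fun w => by
    have : K2eval w ((chainTerm i).subst σ) = K2eval w ((chainTerm j).subst σ) :=
      hσ _ List.mem_cons_self w
    rw [K2eval_subst, K2eval_subst] at this
    exact (chainTerm_eval _ i).symm.trans (this.trans (chainTerm_eval _ j))
  change S v = K2star (K2star (S v))
  by_contra hne
  have hv : Q v = 1 ∧ S v = 2 :=
    (by decide : ∀ q s : Fin 4, ChainRelHolds q s → ¬ s = K2star (K2star s) → q = 1 ∧ s = 2)
      _ _ (hΓ v) hne
  have hQa : Q (fun _ => 1) = 1 := (eval_const_a v (σ 0)).resolve_right <| by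
    change ¬ (_ ∧ Q v = 0 ∨ _ ∧ Q v = 3)
    rw [hv.1]; simp
  have hSa : S (fun _ => 1) = 1 := (eval_const_a v (σ 1)).resolve_right <| by
    change ¬ (_ ∧ S v = 0 ∨ _ ∧ S v = 3)
    rw [hv.2]; simp
  have h0 : Q (fun _ => 0) = 0 ∧ S (fun _ => 0) = 3 :=
    (by decide : ∀ q s : Fin 4, ChainRelHolds q s → (q = 0 ∨ q = 3) → (s = 0 ∨ s = 3) →
      q = 0 ∧ s = 3) _ _ (hΓ _) (eval_const_zero (σ 0)) (eval_const_zero (σ 1))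
  have e1 := hE (fun _ => 1)
  have e2 := hE v
  have e3 := hE (fun _ => 0)
  rw [hQa, hSa] at e1
  rw [hv.1, hv.2] at e2
  rw [h0.1, h0.2] at e3
  exact hij ((by decide : ∀ i j : Fin 7, chainVal 1 1 i = chainVal 1 1 j →
    chainVal 1 2 i = chainVal 1 2 j → chainVal 0 3 i = chainVal 0 3 j → i = j) i j e1 e2 e3)

theorem statement11 (k : ℕ) (B : Fin k → MSAlg)
    (hfin : ∀ i, Finite (B i).carrier)
    (htest : ∀ (Γ : List (MSTerm ℕ × MSTerm ℕ)) (φ ψ : MSTerm ℕ),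
      (∀ i, MSQValid (B i) Γ φ ψ) ↔ MSAdmissible K2alg Γ φ ψ) :
    MultisetLE ({7} : Multiset ℕ)
      (↑(List.ofFn fun i => Nat.card (B i).carrier)) := by
  obtain ⟨i, hi⟩ : ∃ i, ¬ MSQValid (B i) chainRel ts (.star (.star ts)) := by
    by_contra! h
    exact not_admissible_chain ((htest _ _ _).1 h)
  obtain ⟨v, hv, hne⟩ : ∃ v : ℕ → (B i).carrier,
      (∀ p ∈ chainRel, p.1.eval (B i) v = p.2.eval (B i) v) ∧
      ts.eval (B i) v ≠ (MSTerm.star (.star ts)).eval (B i) v := by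
    simpa [MSQValid] using hi
  have hinj : Function.Injective fun j : Fin 7 => (chainTerm j).eval (B i) v := by
    intro j l hjl
    by_contra hjl'
    exact hne ((htest _ _ _).2 (admissible_collapse hjl') i v
      (List.forall_mem_cons.2 ⟨hjl, hv⟩))
  have hcard : 7 ≤ Nat.card (B i).carrier := by
    have := hfin i
    simpa using Nat.card_le_card_of_injective _ hinj
  have hmem : Nat.card (B i).carrier ∈
      (↑(List.ofFn fun i => Nat.card (B i).carrier) : Multiset ℕ) := by
    simp [List.mem_ofFn]
  intro x hx
  have hx7 : x = 7 := by
    by_contra h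
    simp [h] at hx
  subst hx7
  have hlt : 7 < Nat.card (B i).carrier := by
    refine lt_of_le_of_ne hcard fun h => ?_
    have := Multiset.count_pos.2 hmem
    rw [← h] at this
    rw [Multiset.count_singleton_self] at hx
    omega
  refine ⟨_, hlt, ?_⟩
  rw [Multiset.count_singleton, if_neg hlt.ne']
  exact Multiset.count_pos.2 hmem
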